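/- For every CPL formula A there exists a named Boolean formula b_A such that for every finite name set X with FN(A) ∪ FN(b_A) ⊆ X, ⟦A⟧_X = ⟦b_A⟧_X; in particular every interpretation ⟦A⟧_X is a Borel-measurable subset of (2^ω)^X. -/

import Mathlib

open MeasureTheory

/-- The Cantor space `2^ω` of infinite binary sequences. -/
abbrev Cantor : Type := ℕ → Bool

/-- Rational numbers in the unit interval `[0,1]`. -/
abbrev I01 : Type := (Set.Icc (0 : ℚ) 1)

/-- The value of a rational `q ∈ [0,1]` as an extended nonnegative real. -/
noncomputable def qq (q : I01) : ENNReal := ENNReal.ofReal (q.1 : ℝ)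

/-- `μ` is the fair-coin Bernoulli (uniform) product measure on the Cantor space:
it is a probability measure giving each cylinder fixing the values on a finite set `s`
of coordinates the measure `2^{-|s|}`. -/
def IsCantorMeasure (μ : Measure Cantor) : Prop :=
  IsProbabilityMeasure μ ∧
    ∀ (s : Finset ℕ) (v : ℕ → Bool),
      μ {f : Cantor | ∀ i ∈ s, f i = v i} = (2 : ENNReal)⁻¹ ^ s.card

/-- Valuations of the names in a finite name set `X`: the space `(2^ω)^X`. -/
abbrev Val (X : Finset ℕ) : Type := {a : ℕ // a ∈ X} → Cantor

/-- `combine f g` is the common extension `f + g` of valuations `f ∈ (2^ω)^X` and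
`g ∈ (2^ω)^Y`: it agrees with `f` on `X` and with `g` on `Y` (when `X` and `Y` are
disjoint this is the `f + g` of the paper). -/
def combine {X Y : Finset ℕ} (f : Val X) (g : Val Y) : Val (X ∪ Y) :=
  fun a =>
    if h : a.1 ∈ Y then g ⟨a.1, h⟩
    else f ⟨a.1, (Finset.mem_union.mp a.2).resolve_right h⟩

/-- The `f`-projection `Π_f(𝒳) = {g ∈ (2^ω)^Y | f + g ∈ 𝒳}` of a set
`𝒳 ⊆ (2^ω)^{X∪Y}` along `f ∈ (2^ω)^X`. -/
def proj {X Y : Finset ℕ} (f : Val X) (S : Set (Val (X ∪ Y))) : Set (Val Y) :=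
  {g | combine f g ∈ S}

/-- The fair-coin Bernoulli (uniform) product measure on `(2^ω)^X`, obtained as the
pushforward of the Cantor measure `μ` along the (coordinate-separating) injection
determined by the pairing function: the coordinates `(a, i)` are i.i.d. fair coins. -/
noncomputable def cantorPi (μ : Measure Cantor) (X : Finset ℕ) : Measure (Val X) :=
  Measure.map (fun (g : Cantor) (a : {x : ℕ // x ∈ X}) (i : ℕ) => g (Nat.pair a.1 i)) μ

/-- Named Boolean formulas `b ::= xᵢᵃ | ⊤ | ⊥ | ¬b | b ∧ c | b ∨ c`.
`NBF.var i a` is the named propositional variable `xᵢᵃ`. -/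
inductive NBF : Type where
  | var : ℕ → ℕ → NBF
  | tt : NBF
  | ff : NBF
  | neg : NBF → NBF
  | conj : NBF → NBF → NBF
  | disj : NBF → NBF → NBF
deriving DecidableEq

/-- The set of (free) names occurring in a named Boolean formula. -/
def NBF.FN : NBF → Finset ℕ
  | .var _ a => {a}
  | .tt => ∅
  | .ff => ∅
  | .neg b => b.FN
  | .conj b c => b.FN ∪ c.FN
  | .disj b c => b.FN ∪ c.FN

/-- The interpretation `⟦b⟧_X ⊆ (2^ω)^X` of a named Boolean formula with `FN(b) ⊆ X`. -/
def NBF.semN : NBF → (X : Finset ℕ) → Set (Val X)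
  | .var i a, X => {f | ∀ h : a ∈ X, f ⟨a, h⟩ i = true}
  | .tt, _ => Set.univ
  | .ff, _ => ∅
  | .neg b, X => (b.semN X)ᶜ
  | .conj b c, X => b.semN X ∩ c.semN X
  | .disj b c, X => b.semN X ∪ c.semN X

/-- The disjunction `⋁_{i<k} c i` of a finite family of named Boolean formulas. -/
def NBF.bigDisj {k : ℕ} (c : Fin k → NBF) : NBF :=
  (List.ofFn c).foldr NBF.disj NBF.ff

/-- Formulas of (multivariate) counting propositional logic CPL:
`A ::= i_a | ¬A | A ∧ B | A ∨ B | C^q_a A | D^q_a A`, with `i ∈ ℕ`, `a` a name and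
`q` a rational in `[0,1]`.  `CPL.atom i a` is the named atom `i_a`, and
`CPL.cnt q a A` (resp. `CPL.dnt q a A`) is `C^q_a A` (resp. `D^q_a A`). -/
inductive CPL : Type where
  | atom : ℕ → ℕ → CPL
  | neg : CPL → CPL
  | conj : CPL → CPL → CPL
  | disj : CPL → CPL → CPL
  | cnt : I01 → ℕ → CPL → CPL
  | dnt : I01 → ℕ → CPL → CPL
deriving DecidableEq

/-- The set of free names of a CPL formula; `a` is bound in `C^q_a A` and `D^q_a A`. -/
def CPL.FN : CPL → Finset ℕ
  | .atom _ a => {a}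
  | .neg A => A.FN
  | .conj A B => A.FN ∪ B.FN
  | .disj A B => A.FN ∪ B.FN
  | .cnt _ a A => A.FN \ {a}
  | .dnt _ a A => A.FN \ {a}

/-- The interpretation `⟦A⟧_X ⊆ (2^ω)^X` of a CPL formula `A` with `FN(A) ⊆ X`:
`⟦C^q_a A⟧_X = {f | μ(Π_f(⟦A⟧_{X∪{a}})) ≥ q}` and
`⟦D^q_a A⟧_X = {f | μ(Π_f(⟦A⟧_{X∪{a}})) < q}`. -/
noncomputable def CPL.semN (μ : Measure Cantor) : CPL → (X : Finset ℕ) → Set (Val X)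
  | .atom i a, X => {f | ∀ h : a ∈ X, f ⟨a, h⟩ i = true}
  | .neg A, X => (CPL.semN μ A X)ᶜ
  | .conj A B, X => CPL.semN μ A X ∩ CPL.semN μ B X
  | .disj A B, X => CPL.semN μ A X ∪ CPL.semN μ B X
  | .cnt q a A, X =>
      {f | qq q ≤ cantorPi μ {a} (proj (Y := {a}) f (CPL.semN μ A (X ∪ {a})))}
  | .dnt q a A, X =>
      {f | cantorPi μ {a} (proj (Y := {a}) f (CPL.semN μ A (X ∪ {a}))) < qq q}

def NBF.ev : NBF → (ℕ × ℕ → Bool) → Prop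
  | .var i a, v => v (a, i) = true
  | .tt, _ => True
  | .ff, _ => False
  | .neg b, v => ¬ b.ev v
  | .conj b c, v => b.ev v ∧ c.ev v
  | .disj b c, v => b.ev v ∨ c.ev v

def extV {X : Finset ℕ} (f : Val X) : ℕ × ℕ → Bool :=
  fun p => if h : p.1 ∈ X then f ⟨p.1, h⟩ p.2 else true

theorem NBF.semN_iff (b : NBF) (X : Finset ℕ) (f : Val X) :
    f ∈ b.semN X ↔ b.ev (extV f) := by
  induction b with
  | var i a =>
    by_cases h : a ∈ X <;> simp [NBF.semN, NBF.ev, extV, h]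
  | tt => simp [NBF.semN, NBF.ev]
  | ff => simp [NBF.semN, NBF.ev]
  | neg b ih => simp [NBF.semN, NBF.ev, ih]
  | conj b c ih1 ih2 => simp [NBF.semN, NBF.ev, ih1, ih2]
  | disj b c ih1 ih2 => simp [NBF.semN, NBF.ev, ih1, ih2]

theorem NBF.support (b : NBF) : ∃ S : Finset (ℕ × ℕ), ∀ v w : ℕ × ℕ → Bool,
    (∀ p ∈ S, v p = w p) → (b.ev v ↔ b.ev w) := by
  induction b with
  | var i a =>
    refine ⟨{(a, i)}, fun v w h => ?_⟩
    simp [NBF.ev, h (a, i) (by simp)]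
  | tt => exact ⟨∅, fun _ _ _ => Iff.rfl⟩
  | ff => exact ⟨∅, fun _ _ _ => Iff.rfl⟩
  | neg b ih =>
    obtain ⟨S, hS⟩ := ih
    exact ⟨S, fun v w h => not_congr (hS v w h)⟩
  | conj b c ih1 ih2 =>
    obtain ⟨S, hS⟩ := ih1
    obtain ⟨T, hT⟩ := ih2
    exact ⟨S ∪ T, fun v w h => and_congr
      (hS v w fun p hp => h p (Finset.mem_union_left _ hp))
      (hT v w fun p hp => h p (Finset.mem_union_right _ hp))⟩
  | disj b c ih1 ih2 =>
    obtain ⟨S, hS⟩ := ih1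
    obtain ⟨T, hT⟩ := ih2
    exact ⟨S ∪ T, fun v w h => or_congr
      (hS v w fun p hp => h p (Finset.mem_union_left _ hp))
      (hT v w fun p hp => h p (Finset.mem_union_right _ hp))⟩

theorem NBF.definable (S : Finset (ℕ × ℕ)) : ∀ P : (ℕ × ℕ → Bool) → Prop,
    (∀ v w : ℕ × ℕ → Bool, (∀ p ∈ S, v p = w p) → (P v ↔ P w)) →
    ∃ b : NBF, ∀ v, b.ev v ↔ P v := by
  classical
  induction S using Finset.induction_on with
  | empty =>
    intro P hP
    by_cases h : P (fun _ => true)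
    · exact ⟨.tt, fun v => ⟨fun _ => (hP v _ (by simp)).2 h, fun _ => trivial⟩⟩
    · exact ⟨.ff, fun v => ⟨fun h => h.elim, fun h' => h ((hP _ v (by simp)).2 h')⟩⟩
  | insert p S hp ih =>
    intro P hP
    have key : ∀ c : Bool, ∃ b : NBF, ∀ v, b.ev v ↔ P (Function.update v p c) := by
      intro c
      refine ih (fun v => P (Function.update v p c)) fun v w h => hP _ _ fun r hr => ?_
      by_cases hrp : r = p
      · subst hrp; simp
      · simp [hrp, h r ((Finset.mem_insert.1 hr).resolve_left hrp)]
    obtain ⟨b1, h1⟩ := key true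
    obtain ⟨b0, h0⟩ := key false
    refine ⟨.disj (.conj (.var p.2 p.1) b1) (.conj (.neg (.var p.2 p.1)) b0), fun v => ?_⟩
    have hu : Function.update v p (v p) = v := Function.update_eq_self p v
    cases hv : v p <;> rw [hv] at hu <;> simp [NBF.ev, h1, h0, hv, hu]

def ovr (v : ℕ × ℕ → Bool) (a : ℕ) (g : Val {a}) : ℕ × ℕ → Bool :=
  fun p => if p.1 = a then g ⟨a, by simp⟩ p.2 else v p

theorem extV_combine {X : Finset ℕ} (f : Val X) (a : ℕ) (g : Val {a}) :
    extV (combine f g) = ovr (extV f) a g := by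
  funext ⟨c, i⟩
  by_cases h : c = a
  · subst h; simp [extV, combine, ovr]
  · by_cases hX : c ∈ X <;> simp [extV, combine, ovr, h, hX]

theorem NBF.ovr_definable (b : NBF) (a : ℕ) (Q : Set (Val {a}) → Prop) :
    ∃ c : NBF, ∀ v, c.ev v ↔ Q {g | b.ev (ovr v a g)} := by
  obtain ⟨S, hS⟩ := b.support
  refine NBF.definable S _ fun v w h => ?_
  have : {g | b.ev (ovr v a g)} = {g | b.ev (ovr w a g)} := by
    ext g
    refine hS _ _ fun p hp => ?_
    simp [ovr, h p hp]
  rw [this]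

theorem CPL.exists_ev (μ : Measure Cantor) (A : CPL) :
    ∃ b : NBF, ∀ (X : Finset ℕ) (f : Val X), f ∈ CPL.semN μ A X ↔ b.ev (extV f) := by
  induction A with
  | atom i a => exact ⟨.var i a, fun X f => NBF.semN_iff (.var i a) X f⟩
  | neg A ih =>
    obtain ⟨b, hb⟩ := ih
    exact ⟨.neg b, fun X f => not_congr (hb X f)⟩
  | conj A B ih1 ih2 =>
    obtain ⟨b, hb⟩ := ih1
    obtain ⟨c, hc⟩ := ih2
    exact ⟨.conj b c, fun X f => and_congr (hb X f) (hc X f)⟩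
  | disj A B ih1 ih2 =>
    obtain ⟨b, hb⟩ := ih1
    obtain ⟨c, hc⟩ := ih2
    exact ⟨.disj b c, fun X f => or_congr (hb X f) (hc X f)⟩
  | cnt q a A ih =>
    obtain ⟨b, hb⟩ := ih
    obtain ⟨c, hc⟩ := b.ovr_definable a (fun s => qq q ≤ cantorPi μ {a} s)
    refine ⟨c, fun X f => ?_⟩
    simp [hc, CPL.semN, proj, hb, extV_combine]
  | dnt q a A ih =>
    obtain ⟨b, hb⟩ := ih
    obtain ⟨c, hc⟩ := b.ovr_definable a (fun s => cantorPi μ {a} s < qq q)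
    refine ⟨c, fun X f => ?_⟩
    simp [hc, CPL.semN, proj, hb, extV_combine]

theorem NBF.measurable_semN (b : NBF) (X : Finset ℕ) : MeasurableSet (b.semN X) := by
  induction b with
  | var i a =>
    by_cases h : a ∈ X
    · have : (NBF.var i a).semN X = (fun f : Val X => f ⟨a, h⟩ i) ⁻¹' {true} := by
        ext f; simp [NBF.semN, h]
      rw [this]
      exact (by fun_prop : Measurable (fun f : Val X => f ⟨a, h⟩ i)) (measurableSet_singleton _)
    · simp [NBF.semN, h]
  | tt => exact MeasurableSet.univ
  | ff => exact MeasurableSet.empty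
  | neg b ih => exact ih.compl
  | conj b c ih1 ih2 => exact ih1.inter ih2
  | disj b c ih1 ih2 => exact ih1.union ih2

/-- For every CPL formula `A` there is a named Boolean formula `b_A`
such that `⟦A⟧_X = ⟦b_A⟧_X` for every finite name set `X ⊇ FN(A) ∪ FN(b_A)`; in
particular, every interpretation `⟦A⟧_X` (for `X ⊇ FN(A)`) is a Borel-measurable
subset of `(2^ω)^X`. -/
theorem cpl_exists_boolean_formula_and_measurable
    (μ : Measure Cantor) (hμ : IsCantorMeasure μ) (A : CPL) :
    (∃ b : NBF, ∀ X : Finset ℕ, A.FN ∪ b.FN ⊆ X → CPL.semN μ A X = NBF.semN b X) ∧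
    (∀ X : Finset ℕ, A.FN ⊆ X → MeasurableSet (CPL.semN μ A X)) := by
  obtain ⟨b, hb⟩ := CPL.exists_ev μ A
  have h : ∀ X, CPL.semN μ A X = NBF.semN b X := fun X =>
    Set.ext fun f => (hb X f).trans (NBF.semN_iff b X f).symm
  exact ⟨⟨b, fun X _ => h X⟩, fun X _ => h X ▸ NBF.measurable_semN b X⟩
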